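/- Let d ≥ 1, let p be a probability distribution on {0,…,d−1}, let |φ_z⟩ ∈ H_B ⊗ H_R be unit vectors, and let (Λ_z)_{z=0}^{d−1} be a POVM on H_B. Define in ℂ^d_A ⊗ ℂ^d_M ⊗ H_B ⊗ H_R the vectors ψ' = ∑_{z,z'} √p_z |z⟩_A ⊗ |z'⟩_M ⊗ (√Λ_{z'} ⊗ 1_R)|φ_z⟩ and ξ = ∑_z √p_z |z⟩_A ⊗ |z⟩_M ⊗ |φ_z⟩. Then ψ' is a unit vector, the inner product ⟨ξ, ψ'⟩ equals ∑_z p_z ⟨φ_z| (√Λ_z ⊗ 1_R) |φ_z⟩, which is a real number, and it satisfies ⟨ξ, ψ'⟩ ≥ ∑_z p_z ⟨φ_z| (Λ_z ⊗ 1_R) |φ_z⟩ (the guessing probability of the POVM). -/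

import Mathlib

open Matrix BigOperators Finset
open scoped Classical ComplexOrder

noncomputable section

/-- The positive semidefinite square root of a matrix (zero if the matrix is not PSD). -/
def psdSqrt {ι : Type*} [Fintype ι] [DecidableEq ι] (M : Matrix ι ι ℂ) : Matrix ι ι ℂ :=
  if h : M.PosSemidef then
    (h.1.eigenvectorUnitary : Matrix ι ι ℂ) *
      diagonal (((↑) : ℝ → ℂ) ∘ Real.sqrt ∘ h.1.eigenvalues) *
      (star h.1.eigenvectorUnitary : Matrix ι ι ℂ)
  else 0

/-- Trace norm ‖M‖₁ = Tr √(M†M). -/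
def traceNorm {ι : Type*} [Fintype ι] [DecidableEq ι] (M : Matrix ι ι ℂ) : ℝ :=
  ((psdSqrt (Mᴴ * M)).trace).re

/-- Trace distance D(ρ,σ) = ‖ρ−σ‖₁/2. -/
def traceDist {ι : Type*} [Fintype ι] [DecidableEq ι] (ρ σ : Matrix ι ι ℂ) : ℝ :=
  traceNorm (ρ - σ) / 2

/-- Fidelity F(ρ,σ) = ‖√ρ√σ‖₁. -/
def fidelity {ι : Type*} [Fintype ι] [DecidableEq ι] (ρ σ : Matrix ι ι ℂ) : ℝ :=
  traceNorm (psdSqrt ρ * psdSqrt σ)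

/-- ω = exp(2πi/d). -/
def omega (d : ℕ) : ℂ := Complex.exp (2 * Real.pi * Complex.I / d)

/-- Conjugate (X) basis vector |x̃⟩ of ℂ^d, component at z: ω^{−xz}/√d. -/
def xVec (d : ℕ) (x z : Fin d) : ℂ :=
  (starRingEnd ℂ) (omega d ^ (x.val * z.val)) / (Real.sqrt d : ℂ)

/-- Component of (⟨x̃|⊗1_{BR})|ψ⟩. -/
def condVecX {d : ℕ} {β r : Type*} [Fintype β] [Fintype r]
    (ψ : Fin d × β × r → ℂ) (x : Fin d) (p : β × r) : ℂ :=
  ∑ z, (starRingEnd ℂ) (xVec d x z) * ψ (z, p.1, p.2)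

/-- Unnormalized conditional state ϑ_x^R = Tr_B[(⟨x̃|⊗1)|ψ⟩⟨ψ|(|x̃⟩⊗1)]. -/
def thetaR {d : ℕ} {β r : Type*} [Fintype β] [Fintype r]
    (ψ : Fin d × β × r → ℂ) (x : Fin d) : Matrix r r ℂ :=
  Matrix.of fun s s' => ∑ b, condVecX ψ x (b, s) * (starRingEnd ℂ) (condVecX ψ x (b, s'))

/-- X-measured cq marginal ψ̄_X^{AR} = ∑_x |x̃⟩⟨x̃| ⊗ ϑ_x^R. -/
def cqMarginalX {d : ℕ} {β r : Type*} [Fintype β] [Fintype r]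
    (ψ : Fin d × β × r → ℂ) : Matrix (Fin d × r) (Fin d × r) ℂ :=
  Matrix.of fun p q =>
    ∑ x, xVec d x p.1 * (starRingEnd ℂ) (xVec d x q.1) * thetaR ψ x p.2 q.2

/-- Reduced state ψ^R = Tr_{AB}|ψ⟩⟨ψ|. -/
def reducedR {α β r : Type*} [Fintype α] [Fintype β] [Fintype r]
    (ψ : α × β × r → ℂ) : Matrix r r ℂ :=
  Matrix.of fun s s' => ∑ z, ∑ b, ψ (z, b, s) * (starRingEnd ℂ) (ψ (z, b, s'))

/-- The ideal key state (1/d) 1_A ⊗ ψ^R. -/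
def idealKey {d : ℕ} {β r : Type*} [Fintype β] [Fintype r]
    (ψ : Fin d × β × r → ℂ) : Matrix (Fin d × r) (Fin d × r) ℂ :=
  Matrix.of fun p q => (if p.1 = q.1 then ((d : ℂ))⁻¹ else 0) * reducedR ψ p.2 q.2

/-- Security parameter p_secure(X^A|R) = D(ψ̄_X^{AR}, (1/d)1⊗ψ^R). -/
def pSecure {d : ℕ} {β r : Type*} [Fintype β] [DecidableEq β] [Fintype r] [DecidableEq r]
    (ψ : Fin d × β × r → ℂ) : ℝ :=
  traceDist (cqMarginalX ψ) (idealKey ψ)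

/-- Guessing probability ∑_z ⟨ψ|(|z⟩⟨z| ⊗ Λ_z ⊗ 1_R)|ψ⟩. -/
def pGuess {d : ℕ} {β r : Type*} [Fintype β] [Fintype r]
    (ψ : Fin d × β × r → ℂ) (Λ : Fin d → Matrix β β ℂ) : ℝ :=
  (∑ z, ∑ b, ∑ b', ∑ s, (starRingEnd ℂ) (ψ (z, b, s)) * Λ z b b' * ψ (z, b', s)).re

end

section SquareRoot

variable {ι : Type*} [Fintype ι] [DecidableEq ι] {M : Matrix ι ι ℂ}

lemma psdSqrt_posSemidef (hM : M.PosSemidef) : (psdSqrt M).PosSemidef := by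
  rw [psdSqrt, dif_pos hM]
  refine PosSemidef.mul_mul_conjTranspose_same (PosSemidef.diagonal fun i => ?_) _
  simp

lemma eq_eigenvectorUnitary_conj (hM : M.IsHermitian) :
    M = (hM.eigenvectorUnitary : Matrix ι ι ℂ) *
      diagonal (((↑) : ℝ → ℂ) ∘ hM.eigenvalues) *
      (star hM.eigenvectorUnitary : Matrix ι ι ℂ) := by
  conv_lhs => rw [hM.spectral_theorem]
  rfl

lemma psdSqrt_mul_self (hM : M.PosSemidef) : psdSqrt M * psdSqrt M = M := by
  have hU : (star hM.1.eigenvectorUnitary : Matrix ι ι ℂ) *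
      (hM.1.eigenvectorUnitary : Matrix ι ι ℂ) = 1 := by simp
  conv_rhs => rw [eq_eigenvectorUnitary_conj hM.1]
  rw [psdSqrt, dif_pos hM]
  simp only [Matrix.mul_assoc]
  rw [← Matrix.mul_assoc (star _) _ _, hU, Matrix.one_mul, ← Matrix.mul_assoc (diagonal _),
    diagonal_mul_diagonal]
  congr 3
  ext i
  simp [← Complex.ofReal_mul, Real.mul_self_sqrt (hM.eigenvalues_nonneg i)]

lemma eigenvalues_le_one (hM : M.IsHermitian) (hM1 : (1 - M).PosSemidef) (i : ι) :
    hM.eigenvalues i ≤ 1 := by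
  have hU : (star hM.eigenvectorUnitary : Matrix ι ι ℂ) *
      (hM.eigenvectorUnitary : Matrix ι ι ℂ) = 1 := by simp
  have h := hM1.conjTranspose_mul_mul_same (hM.eigenvectorUnitary : Matrix ι ι ℂ)
  have hdiag : (hM.eigenvectorUnitary : Matrix ι ι ℂ)ᴴ * (1 - M) *
      (hM.eigenvectorUnitary : Matrix ι ι ℂ) =
      1 - diagonal (((↑) : ℝ → ℂ) ∘ hM.eigenvalues) := by
    rw [← star_eq_conjTranspose, Matrix.mul_sub, Matrix.sub_mul, Matrix.mul_one, hU]
    conv_lhs => rhs; lhs; rhs; rw [eq_eigenvectorUnitary_conj hM]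
    simp only [Matrix.mul_assoc]
    rw [hU, Matrix.mul_one, ← Matrix.mul_assoc, hU, Matrix.one_mul]
  rw [hdiag] at h
  have hi := h.diag_nonneg (i := i)
  simp only [Matrix.sub_apply, one_apply_eq, diagonal_apply_eq, Function.comp_apply,
    sub_nonneg] at hi
  exact_mod_cast hi

lemma psdSqrt_sub_self_posSemidef (hM : M.PosSemidef) (hM1 : (1 - M).PosSemidef) :
    (psdSqrt M - M).PosSemidef := by
  have h : psdSqrt M - M = (hM.1.eigenvectorUnitary : Matrix ι ι ℂ) *
      diagonal (fun i => ((Real.sqrt (hM.1.eigenvalues i) - hM.1.eigenvalues i : ℝ) : ℂ)) *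
      (hM.1.eigenvectorUnitary : Matrix ι ι ℂ)ᴴ := by
    conv_lhs => rw [psdSqrt, dif_pos hM]
    conv_lhs => rhs; rw [eq_eigenvectorUnitary_conj hM.1]
    rw [← Matrix.sub_mul, ← Matrix.mul_sub, diagonal_sub]
    simp [star_eq_conjTranspose]
  rw [h]
  refine PosSemidef.mul_mul_conjTranspose_same (PosSemidef.diagonal fun i => ?_) _
  have hle := Real.sqrt_le_sqrt (eigenvalues_le_one hM.1 hM1 i)
  have hnn := Real.sqrt_nonneg (hM.1.eigenvalues i)
  have hsq := Real.mul_self_sqrt (hM.eigenvalues_nonneg i)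
  rw [Real.sqrt_one] at hle
  rw [Pi.zero_apply, Complex.zero_le_real]
  nlinarith

end SquareRoot

section LocalExpectation

variable {β r : Type*} [Fintype β] [Fintype r]

/-- The expectation `⟨v|(M ⊗ 1)|v⟩` of a local operator in a bipartite vector. -/
def localExpectation (M : Matrix β β ℂ) (v : β × r → ℂ) : ℂ :=
  ∑ b, ∑ b', ∑ s, (starRingEnd ℂ) (v (b, s)) * M b b' * v (b', s)

lemma localExpectation_eq_sum_dotProduct (M : Matrix β β ℂ) (v : β × r → ℂ) :
    localExpectation M v = ∑ s, star (fun b => v (b, s)) ⬝ᵥ (M *ᵥ fun b => v (b, s)) := by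
  simp only [localExpectation, dotProduct, mulVec, Finset.mul_sum, Pi.star_apply, ← mul_assoc]
  rw [Finset.sum_comm]
  simp only [Finset.sum_comm (s := (Finset.univ : Finset r))]
  rw [Finset.sum_comm]
  rfl

lemma localExpectation_nonneg {M : Matrix β β ℂ} (hM : M.PosSemidef) (v : β × r → ℂ) :
    0 ≤ localExpectation M v := by
  rw [localExpectation_eq_sum_dotProduct]
  exact Finset.sum_nonneg fun s _ => hM.dotProduct_mulVec_nonneg _

lemma localExpectation_sub (M N : Matrix β β ℂ) (v : β × r → ℂ) :
    localExpectation (M - N) v = localExpectation M v - localExpectation N v := by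
  simp only [localExpectation, Matrix.sub_apply, mul_sub, sub_mul, Finset.sum_sub_distrib]

lemma localExpectation_sum {κ : Type*} [Fintype κ] (M : κ → Matrix β β ℂ) (v : β × r → ℂ) :
    localExpectation (∑ k, M k) v = ∑ k, localExpectation (M k) v := by
  simp only [localExpectation_eq_sum_dotProduct, Matrix.sum_mulVec, dotProduct_sum]
  rw [Finset.sum_comm]

lemma localExpectation_conjTranspose_mul_self (A : Matrix β β ℂ) (v : β × r → ℂ) :
    localExpectation (Aᴴ * A) v =
      ((∑ b, ∑ s, ‖∑ b', A b b' * v (b', s)‖ ^ 2 : ℝ) : ℂ) := by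
  rw [localExpectation_eq_sum_dotProduct, Finset.sum_comm]
  push_cast
  refine Finset.sum_congr rfl fun s _ => ?_
  rw [← mulVec_mulVec, dotProduct_mulVec, ← star_mulVec]
  refine Finset.sum_congr rfl fun b _ => ?_
  rw [← Complex.conj_mul']
  rfl

lemma localExpectation_one [DecidableEq β] (v : β × r → ℂ) :
    localExpectation 1 v = ((∑ t, ‖v t‖ ^ 2 : ℝ) : ℂ) := by
  have h := localExpectation_conjTranspose_mul_self (1 : Matrix β β ℂ) v
  simpa [Fintype.sum_prod_type, one_apply] using h

end LocalExpectation

/-- Properties of the coherent measurement state ψ' and the ideal state ξ: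
ψ' is a unit vector, ⟨ξ,ψ'⟩ = ∑_z p_z ⟨φ_z|(√Λ_z ⊗ 1_R)|φ_z⟩ is real, and it is at least
the guessing probability ∑_z p_z ⟨φ_z|(Λ_z ⊗ 1_R)|φ_z⟩. -/
theorem coherent_measurement_overlap {d : ℕ} (hd : 1 ≤ d)
    {β r : Type*} [Fintype β] [DecidableEq β] [Fintype r] [DecidableEq r]
    (p : Fin d → ℝ) (hp0 : ∀ z, 0 ≤ p z) (hp1 : ∑ z, p z = 1)
    (φ : Fin d → β × r → ℂ) (hφ : ∀ z, ∑ t, ‖φ z t‖ ^ 2 = 1)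
    (Λ : Fin d → Matrix β β ℂ)
    (hΛpos : ∀ z, (Λ z).PosSemidef) (hΛsum : ∑ z, Λ z = 1)
    (ψ' : Fin d × Fin d × β × r → ℂ)
    (hψ' : ∀ a m b s, ψ' (a, m, b, s)
        = (Real.sqrt (p a) : ℂ) * ∑ b', psdSqrt (Λ m) b b' * φ a (b', s))
    (ξ : Fin d × Fin d × β × r → ℂ)
    (hξ : ∀ a m b s, ξ (a, m, b, s)
        = (Real.sqrt (p a) : ℂ) * (if m = a then 1 else 0) * φ a (b, s)) :
    (∑ t, ‖ψ' t‖ ^ 2 = 1) ∧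
    ((∑ t, (starRingEnd ℂ) (ξ t) * ψ' t)
        = ∑ z, (p z : ℂ) *
            ∑ b, ∑ b', ∑ s, (starRingEnd ℂ) (φ z (b, s)) * psdSqrt (Λ z) b b' * φ z (b', s)) ∧
    ((∑ t, (starRingEnd ℂ) (ξ t) * ψ' t).im = 0) ∧
    ((∑ z, p z *
        (∑ b, ∑ b', ∑ s, (starRingEnd ℂ) (φ z (b, s)) * Λ z b b' * φ z (b', s)).re)
      ≤ (∑ t, (starRingEnd ℂ) (ξ t) * ψ' t).re) := by
  have hle : ∀ z, (1 - Λ z).PosSemidef := fun z => by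
    rw [← hΛsum, ← Finset.add_sum_erase _ _ (Finset.mem_univ z), add_sub_cancel_left]
    exact posSemidef_sum _ fun i _ => hΛpos i
  have hmeas : ∀ a, ∑ m, ∑ b, ∑ s, ‖∑ b', psdSqrt (Λ m) b b' * φ a (b', s)‖ ^ 2 = 1 := by
    intro a
    have h := localExpectation_sum Λ (φ a)
    rw [hΛsum, localExpectation_one, hφ] at h
    have hm : ∀ m, localExpectation (Λ m) (φ a) =
        ((∑ b, ∑ s, ‖∑ b', psdSqrt (Λ m) b b' * φ a (b', s)‖ ^ 2 : ℝ) : ℂ) := fun m => by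
      rw [← localExpectation_conjTranspose_mul_self, (psdSqrt_posSemidef (hΛpos m)).1.eq,
        psdSqrt_mul_self (hΛpos m)]
    simp only [hm] at h
    exact_mod_cast h.symm
  have hoverlap : (∑ t, (starRingEnd ℂ) (ξ t) * ψ' t) =
      ∑ z, (p z : ℂ) * localExpectation (psdSqrt (Λ z)) (φ z) := by
    rw [Fintype.sum_prod_type]
    refine Finset.sum_congr rfl fun a _ => ?_
    have hp : (Real.sqrt (p a) : ℂ) * (Real.sqrt (p a) : ℂ) = p a := by
      rw [← Complex.ofReal_mul, Real.mul_self_sqrt (hp0 a)]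
    rw [Fintype.sum_prod_type, Finset.sum_eq_single a]
    · simp only [Fintype.sum_prod_type, hξ, hψ', localExpectation, Finset.mul_sum]
      refine Finset.sum_congr rfl fun b _ => ?_
      rw [Finset.sum_comm]
      refine Finset.sum_congr rfl fun b' _ => Finset.sum_congr rfl fun s _ => ?_
      rw [← hp]
      simp only [if_true, mul_one, map_mul, Complex.conj_ofReal]
      ring
    · intro m _ hm
      refine Finset.sum_eq_zero fun t _ => ?_
      simp [hξ a m t.1 t.2, hm]
    · simp
  have hnn : ∀ z, 0 ≤ localExpectation (psdSqrt (Λ z)) (φ z) := fun z =>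
    localExpectation_nonneg (psdSqrt_posSemidef (hΛpos z)) _
  refine ⟨?_, hoverlap, ?_, ?_⟩
  · have hfac : ∀ a m b s, ‖ψ' (a, m, b, s)‖ ^ 2 =
        p a * ‖∑ b', psdSqrt (Λ m) b b' * φ a (b', s)‖ ^ 2 := fun a m b s => by
      rw [hψ', norm_mul, mul_pow, Complex.norm_real, Real.norm_eq_abs, sq_abs,
        Real.sq_sqrt (hp0 a)]
    simp only [Fintype.sum_prod_type, hfac, ← Finset.mul_sum, hmeas, mul_one, hp1]
  · rw [hoverlap, Complex.im_sum]
    refine Finset.sum_eq_zero fun z _ => ?_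
    rw [Complex.im_ofReal_mul, ← (Complex.le_def.mp (hnn z)).2, Complex.zero_im, mul_zero]
  · rw [hoverlap, Complex.re_sum]
    refine Finset.sum_le_sum fun z _ => ?_
    rw [Complex.re_ofReal_mul]
    refine mul_le_mul_of_nonneg_left ?_ (hp0 z)
    have h := localExpectation_nonneg (psdSqrt_sub_self_posSemidef (hΛpos z) (hle z)) (φ z)
    rw [localExpectation_sub, sub_nonneg] at h
    exact (Complex.le_def.mp h).1
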